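/- Assume (H) and that B(t) > 0 for all t. Let a < b be real numbers with A(a) = A(b) = 0 and A(t) > 0 for all t ∈ (a, b). Then there exists a C¹ solution x* of (N) on (a, b) such that x*(t) < 0 for all t ∈ (a, b), lim_{t→a⁺} x*(t) = 0, lim_{t→a⁺} x*′(t) = B(a)/2 − √(B(a)²/4 + A′(a)), lim_{t→b⁻} x*(t) = 0, and lim_{t→b⁻} x*′(t) = B(b)/2 − √(B(b)²/4 + A′(b)). -/

import Mathlib

open Set Filter Topology

/-!
Put `y = -x`. The equation becomes `y' = A / y - B` once the term `C y`, which vanishes at the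
endpoints, is absorbed into `B`. The square `u = y ^ 2` solves `u' = 2 (A - B √u + C u)`, and since
`B ≥ 0` the singular term `-B √u` is decreasing in `u`. The equation is thus one-sided Lipschitz:
solutions of regularised equations from `u a = 0` converge uniformly, to a solution which is
positive because `A` is.

The bound on `A'` and the condition on the coefficients yield `k` for which the line `k (b - t)` is
a strict supersolution, so that `y t ≤ k (b - t)`, and in particular `y → 0` at `b`.

The slope `z = A / y` satisfies `y z' = P(z)` with `P(z) = A' + B z - z ^ 2`. At `a`, for a constant
`q`, the sign of `P(q)` decides that of `A - q y` to the right of `a`, which pins `z` to the larger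
root of `P`. At `b` the larger root attracts, and `z` cannot stop short of it because
`1 / y ≥ 1 / (k (b - t))` is not integrable; the smaller root is excluded since `y ≤ k (b - t)`
forces `y' ≥ -k` at times accumulating at `b`.
-/

section OneSidedLipschitz

variable {E : Type*} [NormedAddCommGroup E]

/-- `u` solves `u' = F t u` on `[a, b]` up to an error of norm at most `ε` in the derivative. -/
def IsApproxSolution [NormedSpace ℝ E] (F : ℝ → E → E) (a b ε : ℝ) (u : ℝ → E) : Prop :=
  ∀ t ∈ Icc a b, ∃ v, HasDerivWithinAt u v (Icc a b) t ∧ ‖v - F t (u t)‖ ≤ ε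

lemma exists_hasDerivWithinAt_of_lipschitzWith_of_bounded [NormedSpace ℝ E] [CompleteSpace E]
    {F : ℝ → E → E} {a b M : ℝ} {K : NNReal} (hab : a ≤ b)
    (hlip : ∀ t ∈ Icc a b, LipschitzWith K (F t))
    (hcont : ∀ x, ContinuousOn (fun t => F t x) (Icc a b))
    (hbdd : ∀ t ∈ Icc a b, ∀ x, ‖F t x‖ ≤ M) (x₀ : E) :
    ∃ u : ℝ → E, u a = x₀ ∧ ∀ t ∈ Icc a b, HasDerivWithinAt u (F t (u t)) (Icc a b) t := by
  have hM : 0 ≤ M := (norm_nonneg _).trans (hbdd a ⟨le_rfl, hab⟩ x₀)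
  have hba : 0 ≤ b - a := sub_nonneg.2 hab
  have hPL : IsPicardLindelof F (⟨a, le_rfl, hab⟩ : Icc a b) x₀
      ⟨M * (b - a), mul_nonneg hM hba⟩ 0 ⟨M, hM⟩ K :=
    { lipschitzOnWith := fun t ht => (hlip t ht).lipschitzOnWith
      continuousOn := fun x _ => hcont x
      norm_le := fun t ht x _ => hbdd t ht x
      mul_max_le := by
        simp only [sub_self, max_eq_left hba, NNReal.coe_zero, sub_zero]
        exact le_rfl }
  exact hPL.exists_eq_forall_mem_Icc_hasDerivWithinAt₀

lemma IsApproxSolution.continuousOn [NormedSpace ℝ E] {F : ℝ → E → E} {a b ε : ℝ} {u : ℝ → E}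
    (hu : IsApproxSolution F a b ε u) : ContinuousOn u (Icc a b) := fun t ht =>
  let ⟨_, hv, _⟩ := hu t ht
  hv.continuousWithinAt

lemma gronwallBound_zero_le {K δ s t : ℝ} (hK : 1 ≤ K) (hδ : 0 ≤ δ) (hst : s ≤ t) :
    gronwallBound 0 K δ s ≤ δ * Real.exp (K * t) := by
  have hK0 : 0 < K := one_pos.trans_le hK
  have hexp : Real.exp (K * s) ≤ Real.exp (K * t) := by gcongr
  simp only [gronwallBound_of_K_ne_0 hK0.ne', zero_mul, zero_add]
  calc δ / K * (Real.exp (K * s) - 1) ≤ δ / K * Real.exp (K * t) := by gcongr; linarith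
    _ ≤ δ * Real.exp (K * t) := by gcongr; exact div_le_self hδ hK

theorem IsApproxSolution.norm_sub_le [InnerProductSpace ℝ E] {F : ℝ → E → E} {a b K ε δ : ℝ}
    {u v : ℝ → E} (hK : 0 ≤ K) (hε : 0 ≤ ε) (hδ : 0 ≤ δ)
    (hF : ∀ t ∈ Icc a b, ∀ x y, inner ℝ (x - y) (F t x - F t y) ≤ K * ‖x - y‖ ^ 2)
    (hu : IsApproxSolution F a b ε u) (hv : IsApproxSolution F a b δ v) (huv : u a = v a) :
    ∀ t ∈ Icc a b, ‖u t - v t‖ ≤ (ε + δ) * Real.exp ((K + 1 / 2) * (b - a)) := by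
  choose! u' hu' hu'ε using hu
  choose! v' hv' hv'δ using hv
  set w : ℝ → E := fun t => u t - v t with hw
  have hderiv : ∀ t ∈ Icc a b,
      HasDerivWithinAt (fun t => ‖w t‖ ^ 2) (2 * inner ℝ (w t) (u' t - v' t)) (Icc a b) t :=
    fun t ht => ((hu' t ht).sub (hv' t ht)).norm_sq
  have hbound : ∀ t ∈ Icc a b,
      2 * inner ℝ (w t) (u' t - v' t) ≤ (2 * K + 1) * ‖w t‖ ^ 2 + (ε + δ) ^ 2 := by
    intro t ht
    have hsplit : u' t - v' t =
        (F t (u t) - F t (v t)) + ((u' t - F t (u t)) - (v' t - F t (v t))) := by abel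
    have herr : inner ℝ (w t) ((u' t - F t (u t)) - (v' t - F t (v t))) ≤ ‖w t‖ * (ε + δ) :=
      (real_inner_le_norm _ _).trans <| by
        gcongr
        exact (_root_.norm_sub_le _ _).trans (add_le_add (hu'ε t ht) (hv'δ t ht))
    rw [hsplit, inner_add_right]
    linarith [hF t ht (u t) (v t), two_mul_le_add_sq ‖w t‖ (ε + δ)]
  intro t ht
  have hgronwall : ‖w t‖ ^ 2 ≤ gronwallBound 0 (2 * K + 1) ((ε + δ) ^ 2) (t - a) :=
    le_gronwallBound_of_liminf_deriv_right_le (f := fun t => ‖w t‖ ^ 2)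
      (fun s hs => (hderiv s hs).continuousWithinAt)
      (fun s hs r hr => ((hderiv s (Ico_subset_Icc_self hs)).mono_of_mem_nhdsWithin
        (Icc_mem_nhdsGE_of_mem hs)).liminf_right_slope_le hr)
      (by simp [hw, huv]) (fun s hs => hbound s (Ico_subset_Icc_self hs)) t ht
  have hsq : ‖w t‖ ^ 2 ≤ ((ε + δ) * Real.exp ((K + 1 / 2) * (b - a))) ^ 2 := calc
    ‖w t‖ ^ 2 ≤ (ε + δ) ^ 2 * Real.exp ((2 * K + 1) * (b - a)) :=
      hgronwall.trans <|
        gronwallBound_zero_le (by linarith) (sq_nonneg _) (sub_le_sub_right ht.2 a)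
    _ = ((ε + δ) * Real.exp ((K + 1 / 2) * (b - a))) ^ 2 := by
      rw [mul_pow, ← Real.exp_nat_mul]
      congr 2
      push_cast
      ring
  exact le_of_sq_le_sq hsq (by positivity)

lemma uniformCauchySeqOn_of_isApproxSolution [InnerProductSpace ℝ E] {F : ℝ → E → E}
    {a b K : ℝ} {x₀ : E} {ε : ℕ → ℝ} {u : ℕ → ℝ → E} (hK : 0 ≤ K)
    (hF : ∀ t ∈ Icc a b, ∀ x y, inner ℝ (x - y) (F t x - F t y) ≤ K * ‖x - y‖ ^ 2)
    (hε₀ : ∀ n, 0 ≤ ε n) (hε : Tendsto ε atTop (𝓝 0))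
    (hu : ∀ n, IsApproxSolution F a b (ε n) (u n)) (hua : ∀ n, u n a = x₀) :
    UniformCauchySeqOn u atTop (Icc a b) := by
  rw [Metric.uniformCauchySeqOn_iff]
  intro η hη
  set M := Real.exp ((K + 1 / 2) * (b - a))
  have hlim : Tendsto (fun n => 2 * (ε n * M)) atTop (𝓝 0) := by
    simpa using (hε.mul_const M).const_mul 2
  obtain ⟨N, hN⟩ := eventually_atTop.1 (hlim.eventually (gt_mem_nhds hη))
  refine ⟨N, fun m hm n hn t ht => ?_⟩
  rw [dist_eq_norm]
  have := IsApproxSolution.norm_sub_le hK (hε₀ m) (hε₀ n) hF (hu m) (hu n)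
    ((hua m).trans (hua n).symm) t ht
  linarith [hN m hm, hN n hn]

lemma hasDerivAt_of_tendstoUniformlyOn_isApproxSolution [NormedSpace ℝ E] {F : ℝ → E → E}
    {a b : ℝ} {ε : ℕ → ℝ} {u : ℕ → ℝ → E} {U : ℝ → E}
    (hF : ContinuousOn (Function.uncurry F) (Ioo a b ×ˢ univ)) (hε : Tendsto ε atTop (𝓝 0))
    (hu : ∀ n, IsApproxSolution F a b (ε n) (u n)) (hU : TendstoUniformlyOn u U atTop (Icc a b)) :
    ∀ t ∈ Ioo a b, HasDerivAt U (F t (U t)) t := by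
  choose! u' hu' hu'ε using hu
  have hUc : ContinuousOn U (Icc a b) :=
    hU.continuousOn (Frequently.of_forall fun n t ht => (hu' n t ht).continuousWithinAt)
  refine fun t ht => hasDerivAt_of_tendstoLocallyUniformlyOn isOpen_Ioo
    (f := u) (f' := u') (g' := fun t => F t (U t)) ?_
    (Eventually.of_forall fun n s hs =>
      (hu' n s (Ioo_subset_Icc_self hs)).hasDerivAt (Icc_mem_nhds hs.1 hs.2))
    (fun s hs => hU.tendsto_at (Ioo_subset_Icc_self hs)) ht
  rw [isOpen_Ioo.tendstoLocallyUniformlyOn_iff_forall_tendsto]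
  intro s hs
  have hIcc : Icc a b ∈ 𝓝 s := Icc_mem_nhds hs.1 hs.2
  have hFs : ContinuousAt (Function.uncurry F) (s, U s) :=
    hF.continuousAt ((isOpen_Ioo.prod isOpen_univ).mem_nhds ⟨hs, mem_univ _⟩)
  have htime : Tendsto Prod.snd ((atTop : Filter ℕ) ×ˢ 𝓝 s) (𝓝 s) := tendsto_snd
  have hU_lim : Tendsto (fun p : ℕ × ℝ => U p.2) (atTop ×ˢ 𝓝 s) (𝓝 (U s)) :=
    (hUc.continuousAt hIcc).tendsto.comp htime
  have hu_lim : Tendsto (fun p : ℕ × ℝ => u p.1 p.2) (atTop ×ˢ 𝓝 s) (𝓝 (U s)) :=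
    hU_lim.congr_uniformity <|
      isOpen_Ioo.tendstoLocallyUniformlyOn_iff_forall_tendsto.1
        (hU.mono Ioo_subset_Icc_self).tendstoLocallyUniformlyOn s hs
  have herr : Tendsto (fun p : ℕ × ℝ => u' p.1 p.2 - F p.2 (u p.1 p.2)) (atTop ×ˢ 𝓝 s) (𝓝 0) :=
    squeeze_zero_norm' ((tendsto_snd.eventually hIcc).mono fun p hp => hu'ε p.1 p.2 hp)
      (hε.comp tendsto_fst)
  have hu'_lim : Tendsto (fun p : ℕ × ℝ => u' p.1 p.2) (atTop ×ˢ 𝓝 s) (𝓝 (F s (U s))) := by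
    simpa using herr.add (hFs.tendsto.comp (htime.prodMk_nhds hu_lim))
  exact ((hFs.tendsto.comp (htime.prodMk_nhds hU_lim)).prodMk_nhds hu'_lim).mono_right
    (nhds_le_uniformity _)

theorem exists_solution_of_oneSidedLipschitz [InnerProductSpace ℝ E] [CompleteSpace E]
    {F : ℝ → E → E} {a b K : ℝ} {x₀ : E} (hab : a ≤ b) (hK : 0 ≤ K)
    (hFc : ContinuousOn (Function.uncurry F) (Ioo a b ×ˢ univ))
    (hF : ∀ t ∈ Icc a b, ∀ x y, inner ℝ (x - y) (F t x - F t y) ≤ K * ‖x - y‖ ^ 2)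
    (happrox : ∀ ε > 0, ∃ u : ℝ → E, u a = x₀ ∧ IsApproxSolution F a b ε u) :
    ∃ u : ℝ → E, ContinuousOn u (Icc a b) ∧ u a = x₀ ∧
      ∀ t ∈ Ioo a b, HasDerivAt u (F t (u t)) t := by
  have hε : ∀ n : ℕ, 0 < 1 / ((n : ℝ) + 1) := fun n => Nat.one_div_pos_of_nat
  choose u hua hu using fun n => happrox _ (hε n)
  have hεlim := tendsto_one_div_add_atTop_nhds_zero_nat (𝕜 := ℝ)
  have hcauchy := uniformCauchySeqOn_of_isApproxSolution hK hF (fun n => (hε n).le) hεlim hu hua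
  have hlim : ∀ t ∈ Icc a b, ∃ x, Tendsto (fun n => u n t) atTop (𝓝 x) := fun t ht =>
    cauchySeq_tendsto_of_complete (hcauchy.cauchySeq ht)
  choose! U hU using hlim
  have hunif := hcauchy.tendstoUniformlyOn_of_tendsto hU
  refine ⟨U, hunif.continuousOn (Frequently.of_forall fun n => (hu n).continuousOn), ?_,
    hasDerivAt_of_tendstoUniformlyOn_isApproxSolution hFc hεlim hu hunif⟩
  exact tendsto_nhds_unique (hU a ⟨le_rfl, hab⟩) (by simp [hua])

end OneSidedLipschitz

section SquaredEquation

variable {A B C R : ℝ → ℝ} {a b M η t : ℝ}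

lemma abs_sqrt_add_sq_sub_sqrt_le {p : ℝ} (hη : 0 ≤ η) (hp : 0 ≤ p) :
    |√(p + η ^ 2) - √p| ≤ η := by
  have hle : √(p + η ^ 2) ≤ √p + η := Real.sqrt_le_iff.2 ⟨by positivity, by
    nlinarith [Real.sq_sqrt hp, mul_nonneg (Real.sqrt_nonneg p) hη]⟩
  have hge : √p ≤ √(p + η ^ 2) := Real.sqrt_le_sqrt (le_add_of_nonneg_right (sq_nonneg η))
  exact abs_le.2 ⟨by linarith, by linarith⟩

lemma abs_sqrt_add_sq_sub_sqrt_add_sq_le {p q : ℝ} (hη : 0 < η) (hp : 0 ≤ p) (hq : 0 ≤ q) :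
    |√(p + η ^ 2) - √(q + η ^ 2)| ≤ |p - q| / (2 * η) := by
  have hηp : η ≤ √(p + η ^ 2) := Real.le_sqrt_of_sq_le (by linarith)
  have hηq : η ≤ √(q + η ^ 2) := Real.le_sqrt_of_sq_le (by linarith)
  have hfactor : (√(p + η ^ 2) - √(q + η ^ 2)) * (√(p + η ^ 2) + √(q + η ^ 2)) = p - q := by
    have hp' : 0 ≤ p + η ^ 2 := by positivity
    have hq' : 0 ≤ q + η ^ 2 := by positivity
    linear_combination Real.sq_sqrt hp' - Real.sq_sqrt hq'
  rw [le_div_iff₀ (by positivity), ← hfactor, abs_mul]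
  gcongr
  exact (by linarith : 2 * η ≤ _).trans (le_abs_self _)

/-- The point of `[0, r]` nearest to `v`, and `0` if `r < 0`. -/
def clamp (r v : ℝ) : ℝ := max 0 (min r v)

lemma clamp_nonneg (r v : ℝ) : 0 ≤ clamp r v := le_max_left _ _

lemma clamp_of_nonpos {r v : ℝ} (hv : v ≤ 0) : clamp r v = 0 :=
  max_eq_left ((min_le_right _ _).trans hv)

lemma clamp_of_le {r v : ℝ} (hr : 0 ≤ r) (hrv : r ≤ v) : clamp r v = r := by
  rw [clamp, min_eq_left hrv, max_eq_right hr]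

lemma clamp_of_mem_Icc {r v : ℝ} (hv : v ∈ Icc 0 r) : clamp r v = v := by
  rw [clamp, min_eq_right hv.2, max_eq_right hv.1]

lemma clamp_mono (r : ℝ) : Monotone (clamp r) := fun _ _ h =>
  max_le_max_left 0 (min_le_min_left r h)

lemma clamp_clamp (r v : ℝ) : clamp r (clamp r v) = clamp r v := by
  grind [clamp]

lemma continuous_uncurry_clamp : Continuous (Function.uncurry clamp) :=
  continuous_const.max (continuous_fst.min continuous_snd)

lemma abs_clamp_sub_clamp_le (r v w : ℝ) : |clamp r v - clamp r w| ≤ |v - w| := by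
  simpa [clamp, Real.dist_eq] using ((LipschitzWith.id.const_min r).const_max 0).dist_le_mul v w

/-- The field `2 (A - B √u + C u)` of the equation for `u = y ^ 2`, where `y' = A / y - B + C y`,
with `√u` replaced by `√(u + η ^ 2)` to make it Lipschitz, and frozen outside `0 ≤ u ≤ R`. -/
noncomputable def truncatedField (A B C R : ℝ → ℝ) (η t v : ℝ) : ℝ :=
  2 * (A t - B t * √(clamp (R t) v + η ^ 2) + C t * clamp (R t) v)

lemma lipschitzWith_truncatedField (A R : ℝ → ℝ) (hη : 0 < η) (hB : |B t| ≤ M) (hC : |C t| ≤ M) :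
    LipschitzWith (2 * (M / (2 * η) + M)).toNNReal (truncatedField A B C R η t) := by
  have hM : 0 ≤ M := (abs_nonneg _).trans hB
  refine LipschitzWith.of_dist_le_mul fun v w => ?_
  rw [Real.coe_toNNReal _ (by positivity), Real.dist_eq, Real.dist_eq]
  set p := clamp (R t) v
  set q := clamp (R t) w
  have hsqrt : |√(p + η ^ 2) - √(q + η ^ 2)| ≤ |p - q| / (2 * η) :=
    abs_sqrt_add_sq_sub_sqrt_add_sq_le hη (clamp_nonneg _ _) (clamp_nonneg _ _)
  have hdiff : truncatedField A B C R η t v - truncatedField A B C R η t w =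
      2 * (C t * (p - q) - B t * (√(p + η ^ 2) - √(q + η ^ 2))) := by
    simp only [truncatedField]
    ring
  calc |truncatedField A B C R η t v - truncatedField A B C R η t w|
      = 2 * |C t * (p - q) - B t * (√(p + η ^ 2) - √(q + η ^ 2))| := by
        rw [hdiff, abs_mul, abs_two]
    _ ≤ 2 * (|C t| * |p - q| + |B t| * |√(p + η ^ 2) - √(q + η ^ 2)|) := by
        rw [← abs_mul, ← abs_mul]
        gcongr
        exact abs_sub _ _
    _ ≤ 2 * (M * |p - q| + M * (|p - q| / (2 * η))) := by gcongr
    _ = 2 * (M / (2 * η) + M) * |p - q| := by ring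
    _ ≤ 2 * (M / (2 * η) + M) * |v - w| := by
        exact mul_le_mul_of_nonneg_left (abs_clamp_sub_clamp_le _ _ _) (by positivity)

lemma mul_truncatedField_sub_le (A R : ℝ → ℝ) (hB : 0 ≤ B t) (hC : C t ≤ M) (hM : 0 ≤ M)
    (v w : ℝ) :
    (v - w) * (truncatedField A B C R η t v - truncatedField A B C R η t w)
      ≤ 2 * M * (v - w) ^ 2 := by
  wlog hwv : w ≤ v generalizing v w
  · linarith [this w v (le_of_not_ge hwv)]
  have hmono : clamp (R t) w ≤ clamp (R t) v := clamp_mono _ hwv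
  have hclamp : clamp (R t) v - clamp (R t) w ≤ v - w := by
    simpa only [abs_of_nonneg (sub_nonneg.2 hmono), abs_of_nonneg (sub_nonneg.2 hwv)]
      using abs_clamp_sub_clamp_le (R t) v w
  have hsqrt : √(clamp (R t) w + η ^ 2) ≤ √(clamp (R t) v + η ^ 2) := by gcongr
  have hsing : 0 ≤ B t * (√(clamp (R t) v + η ^ 2) - √(clamp (R t) w + η ^ 2)) :=
    mul_nonneg hB (sub_nonneg.2 hsqrt)
  have hlin : C t * (clamp (R t) v - clamp (R t) w) ≤ M * (v - w) :=
    mul_le_mul hC hclamp (sub_nonneg.2 hmono) hM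
  calc (v - w) * (truncatedField A B C R η t v - truncatedField A B C R η t w)
      ≤ (v - w) * (2 * (M * (v - w))) := by
        refine mul_le_mul_of_nonneg_left ?_ (sub_nonneg.2 hwv)
        simp only [truncatedField]
        linarith
    _ = 2 * M * (v - w) ^ 2 := by ring

lemma abs_truncatedField_sub_le (A C R : ℝ → ℝ) (hη : 0 ≤ η) (hB : |B t| ≤ M) (v : ℝ) :
    |truncatedField A B C R η t v - truncatedField A B C R 0 t v| ≤ 2 * M * η := by
  have hsqrt := abs_sqrt_add_sq_sub_sqrt_le hη (clamp_nonneg (R t) v)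
  have hdiff : truncatedField A B C R η t v - truncatedField A B C R 0 t v =
      -(2 * (B t * (√(clamp (R t) v + η ^ 2) - √(clamp (R t) v)))) := by
    simp only [truncatedField, zero_pow two_ne_zero, add_zero]
    ring
  calc |truncatedField A B C R η t v - truncatedField A B C R 0 t v|
      = 2 * (|B t| * |√(clamp (R t) v + η ^ 2) - √(clamp (R t) v)|) := by
        rw [hdiff, abs_neg, abs_mul, abs_two, abs_mul]
    _ ≤ 2 * (M * η) := by gcongr; exact (abs_nonneg _).trans hB
    _ = 2 * M * η := by ring

lemma continuousOn_truncatedField (hA : ContinuousOn A (Icc a b)) (hB : ContinuousOn B (Icc a b))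
    (hC : ContinuousOn C (Icc a b)) (hR : ContinuousOn R (Icc a b)) (η : ℝ) :
    ContinuousOn (Function.uncurry (truncatedField A B C R η)) (Icc a b ×ˢ univ) := by
  have hfst : MapsTo Prod.fst (Icc a b ×ˢ (univ : Set ℝ)) (Icc a b) := fun _ h => h.1
  have hclamp : ContinuousOn (fun p : ℝ × ℝ => clamp (R p.1) p.2) (Icc a b ×ˢ univ) :=
    continuous_uncurry_clamp.comp_continuousOn
      ((hR.comp continuousOn_fst hfst).prodMk continuousOn_snd)
  exact (((hA.comp continuousOn_fst hfst).sub ((hB.comp continuousOn_fst hfst).mul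
    (hclamp.add continuousOn_const).sqrt)).add
    ((hC.comp continuousOn_fst hfst).mul hclamp)).const_mul 2

lemma exists_norm_truncatedField_le (hA : ContinuousOn A (Icc a b))
    (hB : ContinuousOn B (Icc a b)) (hC : ContinuousOn C (Icc a b))
    (hR : ContinuousOn R (Icc a b)) (η : ℝ) :
    ∃ N, ∀ t ∈ Icc a b, ∀ v, ‖truncatedField A B C R η t v‖ ≤ N := by
  obtain ⟨ρ, hρ⟩ := isCompact_Icc.exists_bound_of_continuousOn hR
  obtain ⟨N, hN⟩ := (isCompact_Icc.prod isCompact_Icc).exists_bound_of_continuousOn <|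
    (continuousOn_truncatedField hA hB hC hR η).mono
      (prod_mono_right (subset_univ (Icc 0 |ρ|)))
  refine ⟨N, fun t ht v => ?_⟩
  have hle : clamp (R t) v ≤ |ρ| := max_le (abs_nonneg ρ)
    ((min_le_left _ _).trans ((le_abs_self _).trans ((hρ t ht).trans (le_abs_self ρ))))
  simpa [truncatedField, clamp_clamp] using hN (t, clamp (R t) v) ⟨ht, clamp_nonneg _ _, hle⟩

lemma exists_truncatedField_solution (hab : a ≤ b) (hA : ContinuousOn A (Icc a b))
    (hB : ContinuousOn B (Icc a b)) (hC : ContinuousOn C (Icc a b))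
    (hR : ContinuousOn R (Icc a b)) (hB0 : ∀ t ∈ Icc a b, 0 ≤ B t) (u₀ : ℝ) :
    ∃ u : ℝ → ℝ, ContinuousOn u (Icc a b) ∧ u a = u₀ ∧
      ∀ t ∈ Ioo a b, HasDerivAt u (truncatedField A B C R 0 t (u t)) t := by
  obtain ⟨MB, hMB⟩ := isCompact_Icc.exists_bound_of_continuousOn hB
  obtain ⟨MC, hMC⟩ := isCompact_Icc.exists_bound_of_continuousOn hC
  set M := max MB MC
  have hBM : ∀ t ∈ Icc a b, |B t| ≤ M := fun t ht => (hMB t ht).trans (le_max_left _ _)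
  have hCM : ∀ t ∈ Icc a b, |C t| ≤ M := fun t ht => (hMC t ht).trans (le_max_right _ _)
  have hM0 : 0 ≤ M := (abs_nonneg _).trans (hBM a ⟨le_rfl, hab⟩)
  have hcont := continuousOn_truncatedField hA hB hC hR
  refine exists_solution_of_oneSidedLipschitz (K := 2 * M) hab (by positivity)
    ((hcont 0).mono (prod_mono_left Ioo_subset_Icc_self)) (fun t ht v w => ?_) fun ε hε => ?_
  · rw [Real.norm_eq_abs, sq_abs, real_inner_comm]
    exact mul_truncatedField_sub_le A R (hB0 t ht) ((le_abs_self _).trans (hCM t ht)) hM0 v w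
  · have hη : 0 < ε / (2 * M + 1) := by positivity
    obtain ⟨N, hN⟩ := exists_norm_truncatedField_le hA hB hC hR (ε / (2 * M + 1))
    obtain ⟨u, hua, hu⟩ := exists_hasDerivWithinAt_of_lipschitzWith_of_bounded hab
      (fun t ht => lipschitzWith_truncatedField A R hη (hBM t ht) (hCM t ht))
      (fun v => (hcont _).comp (continuousOn_id.prodMk continuousOn_const)
        fun t ht => ⟨ht, mem_univ v⟩) hN u₀
    refine ⟨u, hua, fun t ht => ⟨_, hu t ht, ?_⟩⟩
    calc _ ≤ 2 * M * (ε / (2 * M + 1)) := abs_truncatedField_sub_le A C R hη.le (hBM t ht) (u t)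
      _ ≤ ε := by
        rw [mul_div_assoc', div_le_iff₀ (by positivity)]
        linarith

end SquaredEquation

lemma tendsto_nhdsGT_of_continuousOn_Icc {f : ℝ → ℝ} {a b : ℝ} (hab : a < b)
    (hf : ContinuousOn f (Icc a b)) : Tendsto f (𝓝[>] a) (𝓝 (f a)) :=
  (hf a (left_mem_Icc.2 hab.le)).mono_of_mem_nhdsWithin (Icc_mem_nhdsGT hab)

lemma tendsto_nhdsLT_of_continuousOn_Icc {f : ℝ → ℝ} {a b : ℝ} (hab : a < b)
    (hf : ContinuousOn f (Icc a b)) : Tendsto f (𝓝[<] b) (𝓝 (f b)) :=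
  (hf b (right_mem_Icc.2 hab.le)).mono_of_mem_nhdsWithin (Icc_mem_nhdsLT hab)

lemma nonneg_of_deriv_pos_of_neg {h h' : ℝ → ℝ} {p q l : ℝ} (hp : Tendsto h (𝓝[>] p) (𝓝 l))
    (hl : 0 ≤ l) (hd : ∀ r ∈ Ioo p q, HasDerivAt h (h' r) r)
    (hneg : ∀ r ∈ Ioo p q, h r < 0 → 0 < h' r) : ∀ r ∈ Ioo p q, 0 ≤ h r := by
  intro r hr
  refine le_of_forall_pos_le_add fun η hη => ?_
  obtain ⟨p', hp', hpp', hp'r⟩ : ∃ p', -η < h p' ∧ p < p' ∧ p' < r :=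
    ((hp.eventually (lt_mem_nhds (by linarith))).and (Ioo_mem_nhdsGT hr.1)).exists
  have hsub : ∀ s ∈ Icc p' r, s ∈ Ioo p q := fun s hs =>
    ⟨hpp'.trans_le hs.1, hs.2.trans_lt hr.2⟩
  have hle := image_le_of_deriv_right_lt_deriv_boundary' (f := fun _ => -η) (f' := 0)
    continuousOn_const (fun s _ => hasDerivWithinAt_const ..) hp'.le
    (fun s hs => (hd s (hsub s hs)).continuousAt.continuousWithinAt)
    (fun s hs => (hd s (hsub s (Ico_subset_Icc_self hs))).hasDerivWithinAt)
    (fun s hs heq => hneg s (hsub s (Ico_subset_Icc_self hs)) (heq ▸ neg_lt_zero.2 hη))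
    (right_mem_Icc.2 hp'r.le)
  linarith

/-- `y` is a positive solution of `y' = A / y - B` on `(a, b)`. The substitution `y = -x` turns (N)
into this equation with `B - C y` in place of `B`. -/
structure IsPositiveSolution (A B : ℝ → ℝ) (a b : ℝ) (y : ℝ → ℝ) : Prop where
  pos : ∀ t ∈ Ioo a b, 0 < y t
  hasDerivAt : ∀ t ∈ Ioo a b, HasDerivAt y (A t / y t - B t) t

section Existence

variable {A B C s s' u : ℝ → ℝ} {a b : ℝ}

lemma truncatedField_zero_of_mem_Icc {R : ℝ → ℝ} {t v : ℝ} (hv : v ∈ Icc 0 (R t)) :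
    truncatedField A B C R 0 t v = 2 * (A t - B t * √v + C t * v) := by
  simp only [truncatedField, clamp_of_mem_Icc hv, zero_pow two_ne_zero, add_zero]

lemma truncatedField_zero_of_nonpos {R : ℝ → ℝ} {t v : ℝ} (hv : v ≤ 0) :
    truncatedField A B C R 0 t v = 2 * A t := by
  simp [truncatedField, clamp_of_nonpos hv]

lemma nonneg_of_truncatedField {R : ℝ → ℝ} (hA : ∀ t ∈ Ioo a b, 0 < A t)
    (hua : Tendsto u (𝓝[>] a) (𝓝 0))
    (hu : ∀ t ∈ Ioo a b, HasDerivAt u (truncatedField A B C R 0 t (u t)) t) :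
    ∀ t ∈ Ioo a b, 0 ≤ u t := by
  refine nonneg_of_deriv_pos_of_neg hua le_rfl hu fun t ht hneg => ?_
  rw [truncatedField_zero_of_nonpos hneg.le]
  exact mul_pos two_pos (hA t ht)

lemma pos_of_truncatedField {R : ℝ → ℝ} (hA : ∀ t ∈ Ioo a b, 0 < A t)
    (hua : Tendsto u (𝓝[>] a) (𝓝 0))
    (hu : ∀ t ∈ Ioo a b, HasDerivAt u (truncatedField A B C R 0 t (u t)) t) :
    ∀ t ∈ Ioo a b, 0 < u t := by
  have hnonneg := nonneg_of_truncatedField hA hua hu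
  refine fun t ht => (hnonneg t ht).lt_of_ne' fun hzero => ?_
  have hmin : IsLocalMin u t := by
    filter_upwards [Ioo_mem_nhds ht.1 ht.2] with r hr
    exact hzero.symm ▸ hnonneg r hr
  have hderiv : 2 * A t = 0 := by
    rw [← hmin.hasDerivAt_eq_zero (hu t ht), truncatedField_zero_of_nonpos hzero.le]
  linarith [hA t ht]

lemma le_sq_of_truncatedField (hsc : ContinuousOn s (Icc a b)) (hspos : ∀ t ∈ Ioo a b, 0 < s t)
    (hs : ∀ t ∈ Ioo a b, HasDerivAt s (s' t) t)
    (hsuper : ∀ t ∈ Ioo a b, A t / s t - B t + C t * s t < s' t)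
    (hua : Tendsto u (𝓝[>] a) (𝓝 0))
    (hu : ∀ t ∈ Ioo a b, HasDerivAt u (truncatedField A B C (s ^ 2) 0 t (u t)) t) :
    ∀ t ∈ Ioo a b, u t ≤ s t ^ 2 := by
  intro t ht
  have hab : a < b := ht.1.trans ht.2
  have hsa : Tendsto s (𝓝[>] a) (𝓝 (s a)) :=
    tendsto_nhdsGT_of_continuousOn_Icc hab hsc
  refine sub_nonneg.1 (nonneg_of_deriv_pos_of_neg (h := fun t => s t ^ 2 - u t)
    ((hsa.pow 2).sub hua) (by simpa using sq_nonneg (s a))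
    (fun r hr => ((hs r hr).pow 2).sub (hu r hr)) (fun r hr hneg => ?_) t ht)
  have hsr := hspos r hr
  have hfield : truncatedField A B C (s ^ 2) 0 r (u r) =
      2 * s r * (A r / s r - B r + C r * s r) := by
    have hclamp : clamp (s r ^ 2) (u r) = s r ^ 2 :=
      clamp_of_le (sq_nonneg _) (sub_neg.1 hneg).le
    simp only [truncatedField, Pi.pow_apply, hclamp, zero_pow two_ne_zero, add_zero,
      Real.sqrt_sq hsr.le]
    field_simp
  have := mul_lt_mul_of_pos_left (hsuper r hr) (mul_pos two_pos hsr)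
  simp only [hfield, Nat.cast_ofNat, Nat.add_one_sub_one, pow_one]
  linarith

theorem exists_isPositiveSolution_le (hab : a < b) (hA : ContinuousOn A (Icc a b))
    (hB : ContinuousOn B (Icc a b)) (hC : ContinuousOn C (Icc a b))
    (hApos : ∀ t ∈ Ioo a b, 0 < A t) (hB0 : ∀ t ∈ Icc a b, 0 ≤ B t)
    (hsc : ContinuousOn s (Icc a b)) (hspos : ∀ t ∈ Ioo a b, 0 < s t)
    (hs : ∀ t ∈ Ioo a b, HasDerivAt s (s' t) t)
    (hsuper : ∀ t ∈ Ioo a b, A t / s t - B t + C t * s t < s' t) :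
    ∃ y, IsPositiveSolution A (fun t => B t - C t * y t) a b y ∧
      Tendsto y (𝓝[>] a) (𝓝 0) ∧ ∀ t ∈ Ioo a b, y t ≤ s t := by
  obtain ⟨u, huc, hua, hu⟩ := exists_truncatedField_solution hab.le hA hB hC (hsc.pow 2) hB0 0
  have hua' : Tendsto u (𝓝[>] a) (𝓝 0) := hua ▸
    tendsto_nhdsGT_of_continuousOn_Icc hab huc
  have hupos := pos_of_truncatedField hApos hua' hu
  have hule := le_sq_of_truncatedField hsc hspos hs hsuper hua' hu
  refine ⟨fun t => √(u t), ⟨fun t ht => Real.sqrt_pos.2 (hupos t ht), fun t ht => ?_⟩, ?_,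
    fun t ht => Real.sqrt_le_iff.2 ⟨(hspos t ht).le, hule t ht⟩⟩
  · have hfield := truncatedField_zero_of_mem_Icc (A := A) (B := B) (C := C) (R := s ^ 2)
      ⟨(hupos t ht).le, hule t ht⟩
    refine ((hfield ▸ hu t ht).sqrt (hupos t ht).ne').congr_deriv ?_
    have hne : √(u t) ≠ 0 := (Real.sqrt_pos.2 (hupos t ht)).ne'
    field_simp
    linear_combination -C t * Real.sq_sqrt (hupos t ht).le
  · simpa using hua'.sqrt

end Existence

section Quadratic

variable {α β δ p q r : ℝ}

/-- The quadratic `α + β q - q ^ 2` with `y z' = slopeQuadratic A' B z` for the slope `z = A / y`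
along a positive solution of `y' = A / y - B`. -/
def slopeQuadratic (α β q : ℝ) : ℝ := α + β * q - q ^ 2

/-- The larger root of `slopeQuadratic α β`, when the discriminant is nonnegative. -/
noncomputable def slopeRoot (α β : ℝ) : ℝ := β / 2 + √(β ^ 2 / 4 + α)

lemma lt_slopeRoot_of_slopeQuadratic_pos (hq : 0 < slopeQuadratic α β q) :
    q < slopeRoot α β := by
  have hsq : (q - β / 2) ^ 2 < β ^ 2 / 4 + α := by
    rw [slopeQuadratic] at hq
    linarith
  exact sub_lt_iff_lt_add'.1 (Real.lt_sqrt_of_sq_lt hsq)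

lemma slopeQuadratic_pos_of_lt_slopeRoot (hp : 0 ≤ slopeQuadratic α β p) (hpq : p < q)
    (hq : q < slopeRoot α β) : 0 < slopeQuadratic α β q := by
  have hsq : (p - β / 2) ^ 2 ≤ β ^ 2 / 4 + α := by
    rw [slopeQuadratic] at hp
    linarith
  have hlower := neg_le_of_abs_le (Real.abs_le_sqrt hsq)
  have habs : |q - β / 2| < √(β ^ 2 / 4 + α) :=
    abs_lt.2 ⟨by linarith, sub_lt_iff_lt_add'.2 hq⟩
  rw [Real.lt_sqrt (abs_nonneg _), sq_abs] at habs
  rw [slopeQuadratic]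
  linarith

lemma slopeQuadratic_neg_of_slopeRoot_lt (hq : slopeRoot α β < q) : slopeQuadratic α β q < 0 := by
  have hsqrt : √(β ^ 2 / 4 + α) < q - β / 2 := lt_sub_iff_add_lt'.2 hq
  have hsq := (Real.sqrt_lt' ((Real.sqrt_nonneg _).trans_lt hsqrt)).1 hsqrt
  rw [slopeQuadratic]
  linarith

lemma half_le_slopeRoot (α β : ℝ) : β / 2 ≤ slopeRoot α β :=
  le_add_of_nonneg_right (Real.sqrt_nonneg _)

lemma le_slopeQuadratic_of_mem_Icc (hp : δ ≤ slopeQuadratic α β p) (hq : δ ≤ slopeQuadratic α β q)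
    (hr : r ∈ Icc p q) : δ ≤ slopeQuadratic α β r := by
  have hconcave : ConcaveOn ℝ univ (slopeQuadratic α β) :=
    ((concaveOn_const α convex_univ).add
      ((LinearMap.mulLeft ℝ β).concaveOn convex_univ)).sub even_two.convexOn_pow
  exact (le_min hp hq).trans (hconcave.min_le_of_mem_Icc (mem_univ _) (mem_univ _) hr)

lemma slopeQuadratic_le_of_le (hβ : β ≤ 2 * q) (hqr : q ≤ r) :
    slopeQuadratic α β r ≤ slopeQuadratic α β q := by
  simp only [slopeQuadratic]
  nlinarith [mul_nonneg (sub_nonneg.2 hqr) (by linarith : 0 ≤ q + r - β)]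

lemma tendsto_slopeQuadratic {f g : ℝ → ℝ} {l : Filter ℝ} (hf : Tendsto f l (𝓝 α))
    (hg : Tendsto g l (𝓝 β)) (q : ℝ) :
    Tendsto (fun t => slopeQuadratic (f t) (g t) q) l (𝓝 (slopeQuadratic α β q)) :=
  (hf.add (hg.mul_const q)).sub_const _

end Quadratic

lemma tendsto_of_eventually_between {ι : Type*} {l : Filter ι} {z : ι → ℝ} {Z lo : ℝ}
    (hlo : lo < Z) (hle : ∀ q ∈ Ioo lo Z, ∀ᶠ t in l, q ≤ z t) (hge : ∀ q > Z, ∀ᶠ t in l, z t ≤ q) :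
    Tendsto z l (𝓝 Z) := by
  refine tendsto_order.2 ⟨fun q hq => ?_, fun q hq => ?_⟩
  · obtain ⟨r, hr, hrZ⟩ := exists_between (max_lt hq hlo)
    filter_upwards [hle r ⟨(le_max_right _ _).trans_lt hr, hrZ⟩] with t ht
    exact ((le_max_left _ _).trans_lt hr).trans_le ht
  · obtain ⟨r, hZr, hrq⟩ := exists_between hq
    filter_upwards [hge r hZr] with t ht using ht.trans_lt hrq

lemma tendsto_atTop_of_div_le_deriv {g g' : ℝ → ℝ} {d b c : ℝ} (hdb : d < b) (hc : 0 < c)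
    (hg : ∀ t ∈ Ioo d b, HasDerivAt g (g' t) t) (hg' : ∀ t ∈ Ioo d b, c / (b - t) ≤ g' t) :
    Tendsto g (𝓝[<] b) atTop := by
  have hlog : Tendsto (fun t => Real.log (b - t)) (𝓝[<] b) atBot := by
    refine Real.tendsto_log_nhdsGT_zero.comp (tendsto_nhdsWithin_iff.2 ⟨?_, ?_⟩)
    · exact (Continuous.tendsto' (by fun_prop) b 0 (sub_self b)).mono_left nhdsWithin_le_nhds
    · filter_upwards [self_mem_nhdsWithin] with t ht using sub_pos.2 (mem_Iio.1 ht)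
  have hderiv : ∀ t ∈ Ioo d b,
      HasDerivAt (fun t => g t + c * Real.log (b - t)) (g' t + c * (-1 / (b - t))) t :=
    fun t ht => (hg t ht).add <|
      (((hasDerivAt_id t).const_sub b).log (sub_pos.2 ht.2).ne').const_mul c
  have hmono : MonotoneOn (fun t => g t + c * Real.log (b - t)) (Ioo d b) := by
    refine monotoneOn_of_hasDerivWithinAt_nonneg (convex_Ioo d b)
      (fun t ht => (hderiv t ht).continuousAt.continuousWithinAt)
      (fun t ht => (hderiv t (interior_subset ht)).hasDerivWithinAt) fun t ht => ?_
    have := hg' t (interior_subset ht)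
    rw [← mul_div_assoc, mul_neg_one, neg_div]
    linarith
  obtain ⟨m, hm⟩ := exists_between hdb
  have hlower : Tendsto (fun t => g m + c * Real.log (b - m) + -c * Real.log (b - t)) (𝓝[<] b)
      atTop :=
    tendsto_atTop_add_const_left _ _ (hlog.const_mul_atBot_of_neg (neg_lt_zero.2 hc))
  refine tendsto_atTop_mono' _ ?_ hlower
  filter_upwards [Ioo_mem_nhdsLT hm.2] with t ht
  have := hmono hm ⟨hm.1.trans ht.1, ht.2⟩ ht.1.le
  simp only at this
  linarith

lemma tendsto_const_mul_sub_nhdsLT (k b : ℝ) :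
    Tendsto (fun t => k * (b - t)) (𝓝[<] b) (𝓝 0) :=
  (Continuous.tendsto' (by fun_prop) b 0 (by ring)).mono_left nhdsWithin_le_nhds

lemma frequently_neg_le_deriv {y y' : ℝ → ℝ} {a b k : ℝ} (hab : a < b)
    (hy : ∀ t ∈ Ioo a b, HasDerivAt y (y' t) t) (hpos : ∀ t ∈ Ioo a b, 0 < y t)
    (hle : ∀ t ∈ Ioo a b, y t ≤ k * (b - t)) : ∃ᶠ t in 𝓝[<] b, -k ≤ y' t := by
  intro hlt
  obtain ⟨d, hd, hdlt⟩ := (mem_nhdsLT_iff_exists_mem_Ico_Ioo_subset hab).1 hlt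
  have hsub : Ioo d b ⊆ Ioo a b := Ioo_subset_Ioo_left hd.1
  set gap : ℝ → ℝ := fun t => k * (b - t) - y t
  have hderiv : ∀ t ∈ Ioo d b, HasDerivAt gap (k * -1 - y' t) t := fun t ht =>
    (((hasDerivAt_id t).const_sub b).const_mul k).sub (hy t (hsub ht))
  have hmono : StrictMonoOn gap (Ioo d b) := by
    refine strictMonoOn_of_hasDerivWithinAt_pos (convex_Ioo d b)
      (fun t ht => (hderiv t ht).continuousAt.continuousWithinAt)
      (fun t ht => (hderiv t (interior_subset ht)).hasDerivWithinAt) fun t ht => ?_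
    have : ¬ -k ≤ y' t := hdlt (interior_subset ht)
    linarith
  obtain ⟨m, hdm, hmb⟩ := exists_between hd.2
  obtain ⟨n, hmn, hnb⟩ := exists_between hmb
  have hn : n ∈ Ioo d b := ⟨hdm.trans hmn, hnb⟩
  have hpos_gap : 0 < gap n := (sub_nonneg.2 (hle m (hsub ⟨hdm, hmb⟩))).trans_lt <|
    hmono ⟨hdm, hmb⟩ hn hmn
  refine hpos_gap.not_ge (ge_of_tendsto (tendsto_const_mul_sub_nhdsLT k b) ?_)
  filter_upwards [Ioo_mem_nhdsLT hnb] with t ht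
  have hdt : t ∈ Ioo d b := ⟨hn.1.trans ht.1, ht.2⟩
  exact (hmono hn hdt ht.1).le.trans (sub_le_self _ (hpos t (hsub hdt)).le)

namespace IsPositiveSolution

variable {A A' B y : ℝ → ℝ} {a b q : ℝ}

lemma hasDerivAt_div (h : IsPositiveSolution A B a b y)
    (hA : ∀ t ∈ Ioo a b, HasDerivAt A (A' t) t) {t : ℝ} (ht : t ∈ Ioo a b) :
    HasDerivAt (fun t => A t / y t) (slopeQuadratic (A' t) (B t) (A t / y t) / y t) t := by
  have hy : y t ≠ 0 := (h.pos t ht).ne'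
  refine ((hA t ht).div (h.hasDerivAt t ht) hy).congr_deriv ?_
  simp only [slopeQuadratic]
  field_simp
  ring

lemma le_div_of_slopeQuadratic_pos {p r l : ℝ} (h : IsPositiveSolution A B a b y)
    (hA : ∀ t ∈ Ioo a b, HasDerivAt A (A' t) t) (hsub : Ioo p r ⊆ Ioo a b) (hq : 0 < q)
    (hstart : Tendsto (fun t => A t - q * y t) (𝓝[>] p) (𝓝 l)) (hl : 0 ≤ l)
    (hP : ∀ t ∈ Ioo p r, 0 < slopeQuadratic (A' t) (B t) q) :
    ∀ t ∈ Ioo p r, q ≤ A t / y t := by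
  intro t ht
  rw [le_div_iff₀ (h.pos t (hsub ht)), ← sub_nonneg]
  refine nonneg_of_deriv_pos_of_neg (h := fun t => A t - q * y t) hstart hl
    (fun s hs => (hA s (hsub hs)).sub ((h.hasDerivAt s (hsub hs)).const_mul q))
    (fun s hs hneg => ?_) t ht
  have hlt : A s / y s < q := (div_lt_iff₀ (h.pos s (hsub hs))).2 (sub_neg.1 hneg)
  have := hP s hs
  rw [slopeQuadratic] at this
  nlinarith [mul_pos hq (sub_pos.2 hlt)]

lemma div_le_of_slopeQuadratic_neg {p r l : ℝ} (h : IsPositiveSolution A B a b y)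
    (hA : ∀ t ∈ Ioo a b, HasDerivAt A (A' t) t) (hsub : Ioo p r ⊆ Ioo a b) (hq : 0 < q)
    (hstart : Tendsto (fun t => q * y t - A t) (𝓝[>] p) (𝓝 l)) (hl : 0 ≤ l)
    (hP : ∀ t ∈ Ioo p r, slopeQuadratic (A' t) (B t) q < 0) :
    ∀ t ∈ Ioo p r, A t / y t ≤ q := by
  intro t ht
  rw [div_le_iff₀ (h.pos t (hsub ht)), ← sub_nonneg]
  refine nonneg_of_deriv_pos_of_neg (h := fun t => q * y t - A t) hstart hl
    (fun s hs => ((h.hasDerivAt s (hsub hs)).const_mul q).sub (hA s (hsub hs)))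
    (fun s hs hneg => ?_) t ht
  have hlt : q < A s / y s := (lt_div_iff₀ (h.pos s (hsub hs))).2 (sub_neg.1 hneg)
  have := hP s hs
  rw [slopeQuadratic] at this
  nlinarith [mul_pos hq (sub_pos.2 hlt)]

section LeftEndpoint

variable {α β : ℝ}

theorem tendsto_div_left (hab : a < b) (h : IsPositiveSolution A B a b y)
    (hA : ∀ t ∈ Ioo a b, HasDerivAt A (A' t) t) (hA0 : Tendsto A (𝓝[>] a) (𝓝 0))
    (hy0 : Tendsto y (𝓝[>] a) (𝓝 0)) (hα : Tendsto A' (𝓝[>] a) (𝓝 α))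
    (hβ : Tendsto B (𝓝[>] a) (𝓝 β)) (hα0 : 0 ≤ α) (hβ0 : 0 < β) :
    Tendsto (fun t => A t / y t) (𝓝[>] a) (𝓝 (slopeRoot α β)) := by
  have hroot : 0 < slopeRoot α β := (half_pos hβ0).trans_le (half_le_slopeRoot α β)
  refine tendsto_of_eventually_between hroot (fun q hq => ?_) fun q hq => ?_
  · have hpos : 0 < slopeQuadratic α β q :=
      slopeQuadratic_pos_of_lt_slopeRoot (by simpa [slopeQuadratic] using hα0) hq.1 hq.2
    obtain ⟨c, hc, hP⟩ := (mem_nhdsGT_iff_exists_mem_Ioc_Ioo_subset hab).1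
      ((tendsto_slopeQuadratic hα hβ q).eventually (lt_mem_nhds hpos))
    filter_upwards [Ioo_mem_nhdsGT hc.1] using
      h.le_div_of_slopeQuadratic_pos hA (Ioo_subset_Ioo_right hc.2) hq.1
        (hA0.sub (hy0.const_mul q)) (by simp) hP
  · obtain ⟨c, hc, hP⟩ := (mem_nhdsGT_iff_exists_mem_Ioc_Ioo_subset hab).1
      ((tendsto_slopeQuadratic hα hβ q).eventually
        (gt_mem_nhds (slopeQuadratic_neg_of_slopeRoot_lt hq)))
    filter_upwards [Ioo_mem_nhdsGT hc.1] using
      h.div_le_of_slopeQuadratic_neg hA (Ioo_subset_Ioo_right hc.2) (hroot.trans hq)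
        ((hy0.const_mul q).sub hA0) (by simp) hP

end LeftEndpoint

section RightEndpoint

variable {α β δ k q₀ : ℝ}

lemma eventually_le_div_right (hab : a < b) (h : IsPositiveSolution A B a b y)
    (hA : ∀ t ∈ Ioo a b, HasDerivAt A (A' t) t) (hq : 0 < q)
    (hP : ∀ᶠ t in 𝓝[<] b, 0 < slopeQuadratic (A' t) (B t) q)
    (hfreq : ∃ᶠ t in 𝓝[<] b, q ≤ A t / y t) : ∀ᶠ t in 𝓝[<] b, q ≤ A t / y t := by
  obtain ⟨d, hd, hPd⟩ := (mem_nhdsLT_iff_exists_mem_Ico_Ioo_subset hab).1 hP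
  obtain ⟨p, hqp, hp⟩ := (hfreq.and_eventually (Ioo_mem_nhdsLT hd.2)).exists
  have hpab : p ∈ Ioo a b := ⟨hd.1.trans_lt hp.1, hp.2⟩
  have hstart : ContinuousAt (fun t => A t - q * y t) p :=
    (hA p hpab).continuousAt.sub ((h.hasDerivAt p hpab).continuousAt.const_mul q)
  filter_upwards [Ioo_mem_nhdsLT hp.2] using
    h.le_div_of_slopeQuadratic_pos hA (Ioo_subset_Ioo_left hpab.1.le) hq
      (hstart.tendsto.mono_left nhdsWithin_le_nhds)
      (sub_nonneg.2 ((le_div_iff₀ (h.pos p hpab)).1 hqp)) fun t ht => hPd ⟨hp.1.trans ht.1, ht.2⟩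

lemma eventually_div_le_right (hab : a < b) (h : IsPositiveSolution A B a b y)
    (hA : ∀ t ∈ Ioo a b, HasDerivAt A (A' t) t) (hq : 0 < q)
    (hP : ∀ᶠ t in 𝓝[<] b, slopeQuadratic (A' t) (B t) q < 0)
    (hfreq : ∃ᶠ t in 𝓝[<] b, A t / y t ≤ q) : ∀ᶠ t in 𝓝[<] b, A t / y t ≤ q := by
  obtain ⟨d, hd, hPd⟩ := (mem_nhdsLT_iff_exists_mem_Ico_Ioo_subset hab).1 hP
  obtain ⟨p, hqp, hp⟩ := (hfreq.and_eventually (Ioo_mem_nhdsLT hd.2)).exists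
  have hpab : p ∈ Ioo a b := ⟨hd.1.trans_lt hp.1, hp.2⟩
  have hstart : ContinuousAt (fun t => q * y t - A t) p :=
    ((h.hasDerivAt p hpab).continuousAt.const_mul q).sub (hA p hpab).continuousAt
  filter_upwards [Ioo_mem_nhdsLT hp.2] using
    h.div_le_of_slopeQuadratic_neg hA (Ioo_subset_Ioo_left hpab.1.le) hq
      (hstart.tendsto.mono_left nhdsWithin_le_nhds)
      (sub_nonneg.2 ((div_le_iff₀ (h.pos p hpab)).1 hqp)) fun t ht => hPd ⟨hp.1.trans ht.1, ht.2⟩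

lemma const_div_le_div (h : IsPositiveSolution A B a b y) (hδ : 0 < δ)
    (hle : ∀ t ∈ Ioo a b, y t ≤ k * (b - t)) {t v : ℝ} (ht : t ∈ Ioo a b) (hv : δ ≤ v) :
    δ / k / (b - t) ≤ v / y t := by
  rw [div_div]
  exact div_le_div₀ (hδ.le.trans hv) hv (h.pos t ht) (hle t ht)

lemma frequently_le_div_of_lt_sub (hab : a < b) (h : IsPositiveSolution A B a b y)
    (hle : ∀ t ∈ Ioo a b, y t ≤ k * (b - t)) (hB : Tendsto B (𝓝[<] b) (𝓝 β)) (hq : q < β - k) :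
    ∃ᶠ t in 𝓝[<] b, q ≤ A t / y t := by
  have hqB : ∀ᶠ t in 𝓝[<] b, q + k < B t := hB.eventually (lt_mem_nhds (by linarith))
  refine ((frequently_neg_le_deriv hab h.hasDerivAt h.pos hle).and_eventually hqB).mono ?_
  rintro t ⟨hderiv, hqB⟩
  linarith

lemma frequently_le_div (hab : a < b) (h : IsPositiveSolution A B a b y)
    (hA : ∀ t ∈ Ioo a b, HasDerivAt A (A' t) t) (hk : 0 < k)
    (hle : ∀ t ∈ Ioo a b, y t ≤ k * (b - t)) (hδ : 0 < δ)
    (hP₀ : ∀ᶠ t in 𝓝[<] b, δ ≤ slopeQuadratic (A' t) (B t) q₀)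
    (hP : ∀ᶠ t in 𝓝[<] b, δ ≤ slopeQuadratic (A' t) (B t) q)
    (hz : ∀ᶠ t in 𝓝[<] b, q₀ ≤ A t / y t) : ∃ᶠ t in 𝓝[<] b, q ≤ A t / y t := by
  intro hlt
  obtain ⟨d, hd, hP⟩ := (mem_nhdsLT_iff_exists_mem_Ico_Ioo_subset hab).1
    (hP₀.and (hP.and (hz.and hlt)))
  have hsub : Ioo d b ⊆ Ioo a b := Ioo_subset_Ioo_left hd.1
  have hdiv : Tendsto (fun t => A t / y t) (𝓝[<] b) atTop := by
    refine tendsto_atTop_of_div_le_deriv hd.2 (div_pos hδ hk)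
      (fun t ht => h.hasDerivAt_div hA (hsub ht)) fun t ht => ?_
    obtain ⟨hPq₀, hPq, hq₀, hq⟩ := hP ht
    exact h.const_div_le_div hδ hle (hsub ht)
      (le_slopeQuadratic_of_mem_Icc hPq₀ hPq ⟨hq₀, (not_le.1 hq).le⟩)
  exact (hdiv.eventually_ge_atTop q).frequently hlt

lemma frequently_div_le (hab : a < b) (h : IsPositiveSolution A B a b y)
    (hA : ∀ t ∈ Ioo a b, HasDerivAt A (A' t) t) (hk : 0 < k)
    (hle : ∀ t ∈ Ioo a b, y t ≤ k * (b - t)) (hδ : 0 < δ)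
    (hP : ∀ᶠ t in 𝓝[<] b, slopeQuadratic (A' t) (B t) q ≤ -δ)
    (hB : ∀ᶠ t in 𝓝[<] b, B t ≤ 2 * q) : ∃ᶠ t in 𝓝[<] b, A t / y t ≤ q := by
  intro hlt
  obtain ⟨d, hd, hP⟩ := (mem_nhdsLT_iff_exists_mem_Ico_Ioo_subset hab).1 (hP.and (hB.and hlt))
  have hsub : Ioo d b ⊆ Ioo a b := Ioo_subset_Ioo_left hd.1
  have hdiv : Tendsto (fun t => -(A t / y t)) (𝓝[<] b) atTop := by
    refine tendsto_atTop_of_div_le_deriv hd.2 (div_pos hδ hk)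
      (fun t ht => (h.hasDerivAt_div hA (hsub ht)).neg) fun t ht => ?_
    obtain ⟨hPq, hB, hq⟩ := hP ht
    rw [← neg_div]
    exact h.const_div_le_div hδ hle (hsub ht)
      (le_neg_of_le_neg ((slopeQuadratic_le_of_le hB (not_le.1 hq).le).trans hPq))
  exact ((hdiv.eventually_ge_atTop (-q)).mono fun t ht => neg_le_neg_iff.1 ht).frequently hlt

theorem tendsto_div_right (hab : a < b) (h : IsPositiveSolution A B a b y)
    (hA : ∀ t ∈ Ioo a b, HasDerivAt A (A' t) t) (hα : Tendsto A' (𝓝[<] b) (𝓝 α))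
    (hβ : Tendsto B (𝓝[<] b) (𝓝 β)) (hk : 0 < k) (hkβ : k < β)
    (hle : ∀ t ∈ Ioo a b, y t ≤ k * (b - t)) (hPk : 0 < slopeQuadratic α β k) :
    Tendsto (fun t => A t / y t) (𝓝[<] b) (𝓝 (slopeRoot α β)) := by
  have hP := tendsto_slopeQuadratic hα hβ
  have hPβk : 0 < slopeQuadratic α β (β - k) := by
    rw [slopeQuadratic] at hPk ⊢
    linarith
  obtain ⟨q₀, hPq₀, hq₀, hq₀k⟩ : ∃ q₀, 0 < slopeQuadratic α β q₀ ∧ 0 < q₀ ∧ q₀ < β - k := by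
    have hcont : Continuous (slopeQuadratic α β) := by
      unfold slopeQuadratic
      fun_prop
    exact (((hcont.tendsto _).mono_left nhdsWithin_le_nhds).eventually (lt_mem_nhds hPβk)
      |>.and (Ioo_mem_nhdsLT (sub_pos.2 hkβ))).exists
  have hge_q₀ : ∀ᶠ t in 𝓝[<] b, q₀ ≤ A t / y t :=
    h.eventually_le_div_right hab hA hq₀ ((hP q₀).eventually (lt_mem_nhds hPq₀))
      (h.frequently_le_div_of_lt_sub hab hle hβ hq₀k)
  refine tendsto_of_eventually_between (lt_slopeRoot_of_slopeQuadratic_pos hPβk)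
    (fun q hq => ?_) fun q hq => ?_
  · have hPq := slopeQuadratic_pos_of_lt_slopeRoot hPβk.le hq.1 hq.2
    obtain ⟨δ, hδ, hδmin⟩ := exists_between (lt_min hPq₀ hPq)
    refine h.eventually_le_div_right hab hA (by linarith [hq.1])
      ((hP q).eventually (lt_mem_nhds hPq)) ?_
    exact h.frequently_le_div hab hA hk hle hδ
      ((hP q₀).eventually_const_le (hδmin.trans_le (min_le_left _ _)))
      ((hP q).eventually_const_le (hδmin.trans_le (min_le_right _ _))) hge_q₀
  · have hPq := slopeQuadratic_neg_of_slopeRoot_lt hq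
    have hβq : β < 2 * q := by linarith [half_le_slopeRoot α β]
    refine h.eventually_div_le_right hab hA (by linarith)
      ((hP q).eventually (gt_mem_nhds hPq)) ?_
    exact h.frequently_div_le hab hA hk hle (half_pos (neg_pos.2 hPq))
      ((hP q).eventually_le_const (by linarith)) (hβ.eventually_le_const hβq)

end RightEndpoint

end IsPositiveSolution

section NegativeSolution

variable {A A' B C y : ℝ → ℝ} {a b β c k m : ℝ}

lemma nonneg_of_hasDerivWithinAt_of_pos {d : ℝ} (hab : a < b)
    (hA : HasDerivWithinAt A d (Icc a b) a) (hAa : A a = 0) (hApos : ∀ t ∈ Ioo a b, 0 < A t) :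
    0 ≤ d := by
  have hslope : Tendsto (slope A a) (𝓝[>] a) (𝓝 d) := by
    rw [← nhdsWithin_Ioo_eq_nhdsGT hab]
    exact (hasDerivWithinAt_iff_tendsto_slope' left_notMem_Ioo).1 (hA.mono Ioo_subset_Icc_self)
  refine ge_of_tendsto hslope ?_
  filter_upwards [Ioo_mem_nhdsGT hab] with t ht
  rw [slope_def_field, hAa, sub_zero]
  exact div_nonneg (hApos t ht).le (sub_nonneg.2 ht.1.le)

lemma le_neg_mul_sub_of_le_deriv (hA : ∀ t ∈ Icc a b, HasDerivWithinAt A (A' t) (Icc a b) t)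
    (hAb : A b = 0) (hm : ∀ t ∈ Icc a b, m ≤ A' t) : ∀ t ∈ Icc a b, A t ≤ -m * (b - t) := by
  intro t ht
  have hderiv : ∀ s ∈ interior (Icc a b), HasDerivAt A (A' s) s := fun s hs =>
    (hA s (interior_subset hs)).hasDerivAt (mem_interior_iff_mem_nhds.1 hs)
  have := (convex_Icc a b).mul_sub_le_image_sub_of_le_deriv
    (fun s hs => (hA s hs).continuousWithinAt)
    (fun s hs => (hderiv s hs).differentiableAt.differentiableWithinAt)
    (fun s hs => (hderiv s hs).deriv ▸ hm s (interior_subset hs)) t ht b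
    ⟨ht.1.trans ht.2, le_rfl⟩ ht.2
  rw [hAb] at this
  linarith

lemma nonpos_of_le_deriv (hab : a < b) (hA : ∀ t ∈ Icc a b, HasDerivWithinAt A (A' t) (Icc a b) t)
    (hAa : A a = 0) (hAb : A b = 0) (hm : ∀ t ∈ Icc a b, m ≤ A' t) : m ≤ 0 := by
  have := le_neg_mul_sub_of_le_deriv hA hAb hm a (left_mem_Icc.2 hab.le)
  rw [hAa] at this
  exact neg_nonneg.1 (nonneg_of_mul_nonneg_left this (sub_pos.2 hab))

lemma exists_mul_sq_sub_mul_add_neg {S μ : ℝ} (hS : 1 ≤ S) (hβ : 0 < β) (h : 4 * μ * S < β ^ 2) :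
    ∃ k, 0 < k ∧ k < β ∧ S * k ^ 2 - β * k + μ < 0 := by
  have : 0 < S := one_pos.trans_le hS
  refine ⟨β / (2 * S), by positivity, div_lt_self hβ (by linarith), ?_⟩
  have hvalue : S * (β / (2 * S)) ^ 2 - β * (β / (2 * S)) + μ = (4 * μ * S - β ^ 2) / (4 * S) := by
    field_simp
    ring
  rw [hvalue]
  exact div_neg_of_neg_of_pos (by linarith) (by positivity)

lemma line_supersolution {t : ℝ} (hk : 0 < k) (ht : t ∈ Ioo a b) (hc : 0 ≤ c)
    (hA : A t ≤ -m * (b - t)) (hB : β ≤ B t) (hC : C t ≤ c)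
    (hkneg : (1 + (b - a) * c) * k ^ 2 - β * k + -m < 0) :
    A t / (k * (b - t)) - B t + C t * (k * (b - t)) < -k := by
  have hbt : 0 < b - t := sub_pos.2 ht.2
  have hdiv : A t / (k * (b - t)) ≤ -m / k := by
    rw [div_le_div_iff₀ (by positivity) hk]
    calc A t * k ≤ -m * (b - t) * k := by gcongr
      _ = -m * (k * (b - t)) := by ring
  have hlin : C t * (k * (b - t)) ≤ c * (k * (b - a)) := by
    gcongr
    exact ht.1.le
  have hneg : -m / k + c * (k * (b - a)) - β + k < 0 := by
    have : -m / k + c * (k * (b - a)) - β + k =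
        ((1 + (b - a) * c) * k ^ 2 - β * k + -m) / k := by
      field_simp
      ring
    rw [this]
    exact div_neg_of_neg_of_pos hkneg hk
  linarith

lemma slopeQuadratic_pos_of_mul_sq_sub_mul_add_neg {α γ S : ℝ} (hS : 1 ≤ S) (hk : 0 ≤ k)
    (hα : m ≤ α) (hγ : β ≤ γ) (hkneg : S * k ^ 2 - β * k + -m < 0) :
    0 < slopeQuadratic α γ k := by
  have hsq : k ^ 2 ≤ S * k ^ 2 := le_mul_of_one_le_left (sq_nonneg k) hS
  have hmul : β * k ≤ γ * k := by gcongr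
  rw [slopeQuadratic]
  linarith

lemma contDiffOn_one_of_hasDerivAt {f f' : ℝ → ℝ} {U : Set ℝ} (hU : IsOpen U)
    (hf : ∀ t ∈ U, HasDerivAt f (f' t) t) (hf' : ContinuousOn f' U) : ContDiffOn ℝ 1 f U := by
  rw [← zero_add 1, contDiffOn_succ_iff_deriv_of_isOpen hU]
  refine ⟨fun t ht => (hf t ht).differentiableAt.differentiableWithinAt, by simp, ?_⟩
  exact contDiffOn_zero.2 (hf'.congr fun t ht => (hf t ht).deriv)

lemma IsPositiveSolution.hasDerivAt_neg (h : IsPositiveSolution A (fun t => B t - C t * y t) a b y)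
    {t : ℝ} (ht : t ∈ Ioo a b) : HasDerivAt (-y) (B t - C t * y t - A t / y t) t :=
  (h.hasDerivAt t ht).neg.congr_deriv (neg_sub _ _)

lemma IsPositiveSolution.tendsto_deriv_neg {l : Filter ℝ} {α β : ℝ}
    (h : IsPositiveSolution A (fun t => B t - C t * y t) a b y) (hl : Ioo a b ∈ l)
    (hB : Tendsto (fun t => B t - C t * y t) l (𝓝 β))
    (hdiv : Tendsto (fun t => A t / y t) l (𝓝 (slopeRoot α β))) :
    Tendsto (deriv (-y)) l (𝓝 (β / 2 - √(β ^ 2 / 4 + α))) := by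
  have hlim : β - slopeRoot α β = β / 2 - √(β ^ 2 / 4 + α) := by
    rw [slopeRoot]
    ring
  refine (hlim ▸ hB.sub hdiv).congr' ?_
  filter_upwards [hl] with t ht using (h.hasDerivAt_neg ht).deriv.symm

lemma IsPositiveSolution.contDiffOn_neg
    (h : IsPositiveSolution A (fun t => B t - C t * y t) a b y) (hA : ContinuousOn A (Ioo a b))
    (hB : ContinuousOn B (Ioo a b)) (hC : ContinuousOn C (Ioo a b)) :
    ContDiffOn ℝ 1 (-y) (Ioo a b) := by
  have hy : ContinuousOn y (Ioo a b) := fun t ht =>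
    (h.hasDerivAt t ht).continuousAt.continuousWithinAt
  exact contDiffOn_one_of_hasDerivAt isOpen_Ioo (fun t ht => h.hasDerivAt_neg ht)
    ((hB.sub (hC.mul hy)).sub (hA.div hy fun t ht => (h.pos t ht).ne'))

lemma IsPositiveSolution.neg_mul_deriv_neg
    (h : IsPositiveSolution A (fun t => B t - C t * y t) a b y) {t : ℝ} (ht : t ∈ Ioo a b) :
    (-y) t * deriv (-y) t = A t + B t * (-y) t + C t * (-y) t ^ 2 := by
  have hy : y t ≠ 0 := (h.pos t ht).ne'
  rw [(h.hasDerivAt_neg ht).deriv, Pi.neg_apply]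
  field_simp
  ring

theorem exists_isPositiveSolution_le_line (hab : a < b)
    (hA : ∀ t ∈ Icc a b, HasDerivWithinAt A (A' t) (Icc a b) t)
    (hB : ContinuousOn B (Icc a b)) (hC : ContinuousOn C (Icc a b)) (hAb : A b = 0)
    (hApos : ∀ t ∈ Ioo a b, 0 < A t) (hβ : 0 ≤ β) (hBβ : ∀ t ∈ Icc a b, β ≤ B t)
    (hm : ∀ t ∈ Icc a b, m ≤ A' t) (hc : 0 ≤ c) (hCc : ∀ t ∈ Icc a b, C t ≤ c) (hk : 0 < k)
    (hkneg : (1 + (b - a) * c) * k ^ 2 - β * k + -m < 0) :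
    ∃ y, IsPositiveSolution A (fun t => B t - C t * y t) a b y ∧
      Tendsto y (𝓝[>] a) (𝓝 0) ∧ ∀ t ∈ Ioo a b, y t ≤ k * (b - t) := by
  have hline : ∀ t, HasDerivAt (fun t => k * (b - t)) (-k) t := fun t => by
    simpa using ((hasDerivAt_id t).const_sub b).const_mul k
  have hAle := le_neg_mul_sub_of_le_deriv hA hAb hm
  refine exists_isPositiveSolution_le hab (fun t ht => (hA t ht).continuousWithinAt) hB hC hApos
    (fun t ht => hβ.trans (hBβ t ht)) (fun t _ => (hline t).continuousAt.continuousWithinAt)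
    (fun t ht => mul_pos hk (sub_pos.2 ht.2)) (fun t _ => hline t) fun t ht => ?_
  have ht' := Ioo_subset_Icc_self ht
  exact line_supersolution hk ht hc (hAle t ht') (hBβ t ht') (hCc t ht') hkneg

lemma IsPositiveSolution.tendsto_zero_of_le_line (hab : a < b) (h : IsPositiveSolution A B a b y)
    (hle : ∀ t ∈ Ioo a b, y t ≤ k * (b - t)) : Tendsto y (𝓝[<] b) (𝓝 0) := by
  refine tendsto_of_tendsto_of_tendsto_of_le_of_le' tendsto_const_nhds
    (tendsto_const_mul_sub_nhdsLT k b) ?_ ?_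
  · filter_upwards [Ioo_mem_nhdsLT hab] with t ht using (h.pos t ht).le
  · filter_upwards [Ioo_mem_nhdsLT hab] with t ht using hle t ht

theorem negative_solution_both_endpoints_general (hab : a < b)
    (hA : ∀ t ∈ Icc a b, HasDerivWithinAt A (A' t) (Icc a b) t)
    (hA' : ContinuousOn A' (Icc a b)) (hB : ContinuousOn B (Icc a b))
    (hC : ContinuousOn C (Icc a b)) (hAa : A a = 0) (hAb : A b = 0)
    (hApos : ∀ t ∈ Ioo a b, 0 < A t) (hβ : 0 ≤ β) (hBβ : ∀ t ∈ Icc a b, β ≤ B t)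
    (hm : ∀ t ∈ Icc a b, m ≤ A' t) (hc : 0 ≤ c) (hCc : ∀ t ∈ Icc a b, C t ≤ c)
    (hcond : -4 * m * (1 + (b - a) * c) < β ^ 2) :
    ∃ x : ℝ → ℝ, ContDiffOn ℝ 1 x (Ioo a b) ∧
      (∀ t ∈ Ioo a b, x t * deriv x t = A t + B t * x t + C t * x t ^ 2) ∧
      (∀ t ∈ Ioo a b, x t < 0) ∧
      Tendsto x (𝓝[>] a) (𝓝 0) ∧
      Tendsto (deriv x) (𝓝[>] a) (𝓝 (B a / 2 - √(B a ^ 2 / 4 + A' a))) ∧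
      Tendsto x (𝓝[<] b) (𝓝 0) ∧
      Tendsto (deriv x) (𝓝[<] b) (𝓝 (B b / 2 - √(B b ^ 2 / 4 + A' b))) := by
  have ha := left_mem_Icc.2 hab.le
  have hb := right_mem_Icc.2 hab.le
  have hm0 : m ≤ 0 := nonpos_of_le_deriv hab hA hAa hAb hm
  have hS : 1 ≤ 1 + (b - a) * c := le_add_of_nonneg_right (mul_nonneg (sub_nonneg.2 hab.le) hc)
  have hβ0 : 0 < β := by
    refine hβ.lt_of_ne' (sq_pos_iff.1 (lt_of_le_of_lt ?_ hcond))
    exact mul_nonneg (by linarith) (by linarith)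
  obtain ⟨k, hk, hkβ, hkneg⟩ : ∃ k, 0 < k ∧ k < β ∧
      (1 + (b - a) * c) * k ^ 2 - β * k + -m < 0 :=
    exists_mul_sq_sub_mul_add_neg hS hβ0 (by linarith)
  obtain ⟨y, hy, hya, hyk⟩ :=
    exists_isPositiveSolution_le_line hab hA hB hC hAb hApos hβ hBβ hm hc hCc hk hkneg
  have hyb : Tendsto y (𝓝[<] b) (𝓝 0) := hy.tendsto_zero_of_le_line hab hyk
  have hAderiv : ∀ t ∈ Ioo a b, HasDerivAt A (A' t) t := fun t ht =>
    (hA t (Ioo_subset_Icc_self ht)).hasDerivAt (Icc_mem_nhds ht.1 ht.2)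
  have hAc : ContinuousOn A (Icc a b) := fun t ht => (hA t ht).continuousWithinAt
  have hBa : Tendsto (fun t => B t - C t * y t) (𝓝[>] a) (𝓝 (B a)) := by
    simpa using (tendsto_nhdsGT_of_continuousOn_Icc hab hB).sub
      ((tendsto_nhdsGT_of_continuousOn_Icc hab hC).mul hya)
  have hBb : Tendsto (fun t => B t - C t * y t) (𝓝[<] b) (𝓝 (B b)) := by
    simpa using (tendsto_nhdsLT_of_continuousOn_Icc hab hB).sub
      ((tendsto_nhdsLT_of_continuousOn_Icc hab hC).mul hyb)
  refine ⟨-y, hy.contDiffOn_neg (hAc.mono Ioo_subset_Icc_self) (hB.mono Ioo_subset_Icc_self)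
    (hC.mono Ioo_subset_Icc_self), fun t ht => hy.neg_mul_deriv_neg ht,
    fun t ht => neg_neg_of_pos (hy.pos t ht), neg_zero (G := ℝ) ▸ hya.neg,
    hy.tendsto_deriv_neg (Ioo_mem_nhdsGT hab) hBa ?_, neg_zero (G := ℝ) ▸ hyb.neg,
    hy.tendsto_deriv_neg (Ioo_mem_nhdsLT hab) hBb ?_⟩
  · exact hy.tendsto_div_left hab hAderiv (hAa ▸ tendsto_nhdsGT_of_continuousOn_Icc hab hAc) hya
      (tendsto_nhdsGT_of_continuousOn_Icc hab hA') hBa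
      (nonneg_of_hasDerivWithinAt_of_pos hab (hA a ha) hAa hApos) (hβ0.trans_le (hBβ a ha))
  · exact hy.tendsto_div_right hab hAderiv (tendsto_nhdsLT_of_continuousOn_Icc hab hA') hBb hk
      (hkβ.trans_le (hBβ b hb)) hyk
      (slopeQuadratic_pos_of_mul_sq_sub_mul_add_neg hS hk.le (hm b hb) (hBβ b hb) hkneg)

end NegativeSolution

section Periodic

variable {f : ℝ → ℝ} {T a b : ℝ}

lemma sInf_image_Icc_le_of_periodic (hT : 0 < T) (hper : Function.Periodic f T)
    (hf : Continuous f) (t : ℝ) : sInf (f '' Icc 0 T) ≤ f t := by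
  obtain ⟨s, hs, hst⟩ := hper.exists_mem_Ico₀ hT t
  exact hst ▸ csInf_le (isCompact_Icc.image hf).bddBelow
    (mem_image_of_mem f (Ico_subset_Icc_self hs))

lemma le_sSup_image_Icc_of_periodic (hT : 0 < T) (hper : Function.Periodic f T)
    (hf : Continuous f) (t : ℝ) : f t ≤ sSup (f '' Icc 0 T) := by
  obtain ⟨s, hs, hst⟩ := hper.exists_mem_Ico₀ hT t
  exact hst ▸ le_csSup (isCompact_Icc.image hf).bddAbove
    (mem_image_of_mem f (Ico_subset_Icc_self hs))

lemma periodic_deriv {𝕜 E : Type*} [NontriviallyNormedField 𝕜] [NormedAddCommGroup E]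
    [NormedSpace 𝕜 E] {f : 𝕜 → E} {T : 𝕜} (hper : Function.Periodic f T) :
    Function.Periodic (deriv f) T := fun t => by
  rw [← deriv_comp_add_const, funext hper]

lemma sub_le_of_periodic_of_ne_zero (hT : 0 < T) (hper : Function.Periodic f T) (ha : f a = 0)
    (hne : ∀ t ∈ Ioo a b, f t ≠ 0) : b - a ≤ T := by
  by_contra! hlt
  exact hne (a + T) ⟨by linarith, by linarith⟩ ((hper a).trans ha)

lemma exists_bounds_on_Icc_of_periodic {A B C : ℝ → ℝ} (hT : 0 < T) (hA : ContDiff ℝ 1 A)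
    (hB : Continuous B) (hC : Continuous C) (hAper : Function.Periodic A T)
    (hBper : Function.Periodic B T) (hCper : Function.Periodic C T)
    (hcond : -4 * sInf (deriv A '' Icc 0 T) * (1 + T * sSup ((fun t => |C t|) '' Icc 0 T)) <
      sInf ((fun t => |B t|) '' Icc 0 T) ^ 2)
    (hBpos : ∀ t, 0 < B t) (hab : a < b) (hAa : A a = 0) (hAb : A b = 0)
    (hApos : ∀ t ∈ Ioo a b, 0 < A t) :
    ∃ β m c, 0 ≤ β ∧ (∀ t ∈ Icc a b, β ≤ B t) ∧ (∀ t ∈ Icc a b, m ≤ deriv A t) ∧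
      0 ≤ c ∧ (∀ t ∈ Icc a b, C t ≤ c) ∧ -4 * m * (1 + (b - a) * c) < β ^ 2 := by
  have hm := sInf_image_Icc_le_of_periodic hT (periodic_deriv hAper) (hA.continuous_deriv le_rfl)
  have hβ := sInf_image_Icc_le_of_periodic hT (hBper.comp abs) hB.abs
  have hc := le_sSup_image_Icc_of_periodic hT (hCper.comp abs) hC.abs
  have hm0 : sInf (deriv A '' Icc 0 T) ≤ 0 :=
    nonpos_of_le_deriv hab
      (fun t _ => (hA.differentiable one_ne_zero t).hasDerivAt.hasDerivWithinAt) hAa hAb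
      fun t _ => hm t
  have hc0 := (abs_nonneg (C 0)).trans (hc 0)
  have hba : b - a ≤ T := sub_le_of_periodic_of_ne_zero hT hAper hAa fun t ht => (hApos t ht).ne'
  refine ⟨_, _, _, Real.sInf_nonneg (forall_mem_image.2 fun t _ => abs_nonneg (B t)),
    fun t _ => (hβ t).trans_eq (abs_of_pos (hBpos t)), fun t _ => hm t, hc0,
    fun t _ => (le_abs_self _).trans (hc t), lt_of_le_of_lt ?_ hcond⟩
  exact mul_le_mul_of_nonneg_left (add_le_add le_rfl (mul_le_mul_of_nonneg_right hba hc0))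
    (by linarith)

end Periodic

/-- under (H) with B > 0, between consecutive zeros a < b of A with A > 0 on (a,b),
there is a negative C¹ solution x* of (N) on (a,b) with prescribed limits of x* and x*′ at
both endpoints. -/
theorem negative_solution_both_endpoints
    (T : ℝ) (hT : 0 < T) (A B C : ℝ → ℝ)
    (hA : ContDiff ℝ 1 A) (hB : ContDiff ℝ 1 B) (hC : ContDiff ℝ 1 C)
    (hAper : Function.Periodic A T) (hBper : Function.Periodic B T)
    (hCper : Function.Periodic C T)
    (hzero : ∃ t ∈ Icc (0 : ℝ) T, A t = 0)
    (hcond : (sInf ((fun t => |B t|) '' Icc (0 : ℝ) T)) ^ 2 >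
      -4 * sInf ((fun t => deriv A t) '' Icc (0 : ℝ) T) *
        (1 + T * sSup ((fun t => |C t|) '' Icc (0 : ℝ) T)))
    (hBpos : ∀ t : ℝ, 0 < B t)
    (a b : ℝ) (hab : a < b) (hAa : A a = 0) (hAb : A b = 0)
    (hApos : ∀ t ∈ Ioo a b, 0 < A t) :
    ∃ x : ℝ → ℝ, ContDiffOn ℝ 1 x (Ioo a b) ∧
      (∀ t ∈ Ioo a b, x t * deriv x t = A t + B t * x t + C t * x t ^ 2) ∧
      (∀ t ∈ Ioo a b, x t < 0) ∧
      Tendsto x (𝓝[>] a) (𝓝 0) ∧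
      Tendsto (deriv x) (𝓝[>] a)
        (𝓝 (B a / 2 - Real.sqrt (B a ^ 2 / 4 + deriv A a))) ∧
      Tendsto x (𝓝[<] b) (𝓝 0) ∧
      Tendsto (deriv x) (𝓝[<] b)
        (𝓝 (B b / 2 - Real.sqrt (B b ^ 2 / 4 + deriv A b))) := by
  obtain ⟨β, m, c, hβ, hBβ, hm, hc, hCc, hcond⟩ := exists_bounds_on_Icc_of_periodic hT hA
    hB.continuous hC.continuous hAper hBper hCper hcond hBpos hab hAa hAb hApos
  exact negative_solution_both_endpoints_general hab
    (fun t _ => (hA.differentiable one_ne_zero t).hasDerivAt.hasDerivWithinAt)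
    (hA.continuous_deriv le_rfl).continuousOn hB.continuous.continuousOn
    hC.continuous.continuousOn hAa hAb hApos hβ hBβ hm hc hCc hcond
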